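/- (Combined Bressoud–Göllnitz–Gordon identity, stated with q replaced by q^2 to avoid half-integer powers.) Let q be a complex number with 0 < |q| < 1, and let k ≥ 1 and 1 ≤ i ≤ k be integers. Then ∑_{s_0 ≥ s_1 ≥ ⋯ ≥ s_{k-1} ≥ 0} (-q;q^2)_{s_0} · q^{s_0^2 + 2(s_1^2 + ⋯ + s_{k-1}^2) + 2(s_i + ⋯ + s_{k-1})} / [(q^2;q^2)_{s_0-s_1} ⋯ (q^2;q^2)_{s_{k-2}-s_{k-1}} (q^4;q^4)_{s_{k-1}}] = ((-q;q^2)_∞ / (q^2;q^2)_∞) · (q^{4k+2}, q^{2i+1}, q^{4k-2i+1}; q^{4k+2})_∞, where the linear term s_i + ⋯ + s_{k-1} is empty (equal to 0) when i = k. -/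

import Mathlib

/-- The finite q-Pochhammer symbol `(x;q)_n = ∏_{j=0}^{n-1} (1 - x q^j)`. -/
noncomputable def qPoch (x q : ℂ) (n : ℕ) : ℂ := ∏ j ∈ Finset.range n, (1 - x * q ^ j)

/-- The infinite q-Pochhammer symbol `(x;q)_∞ = ∏_{j=0}^{∞} (1 - x q^j)`. -/
noncomputable def qPochInf (x q : ℂ) : ℂ := ∏' j : ℕ, (1 - x * q ^ j)

/-!
Write `Q = q ^ 2`. A bilateral Bailey pair relative to `Q ^ e` consists of a sequence `α` on `ℤ`
and its transform `β`, and Bailey's lemma, a summed-up form of the `q`-Chu–Vandermonde sum, turns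
a pair into a new one in which `α r` is multiplied by an explicit power of `q`. Relative to `Q`,
the unit pair has `α r = (-1) ^ r * q ^ (r ^ 2 - r)`; one step with parameter `-Q` makes
`β n = 1 / (q ^ 4; q ^ 4)_n`, the innermost factor of the multisum, and `k - i` steps with parameter
`0` insert the variables that carry a linear term. The reflection `r ↦ -1 - r` shows that the
resulting pair is one relative to `1` as well, and `i - 1` more steps insert the other variables.
The limiting Bailey lemma with parameter `-q` then equates the multisum with the theta series
`∑ (-1) ^ r * q ^ ((2 * k + 1) * r ^ 2 + 2 * (k - i) * r)`, which Jacobi's triple product evaluates.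
The finite form of the triple product is itself a `q`-Chu–Vandermonde sum.
-/

open Filter Finset Topology

section QPochhammer

variable {Q x : ℂ}

lemma qPoch_zero (x Q : ℂ) : qPoch x Q 0 = 1 := prod_range_zero _

lemma qPoch_zero_left (Q : ℂ) (n : ℕ) : qPoch 0 Q n = 1 := by simp [qPoch]

lemma qPoch_succ (x Q : ℂ) (n : ℕ) : qPoch x Q (n + 1) = qPoch x Q n * (1 - x * Q ^ n) :=
  prod_range_succ _ _

lemma qPoch_add (x Q : ℂ) (n m : ℕ) :
    qPoch x Q (n + m) = qPoch x Q n * qPoch (x * Q ^ n) Q m := by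
  simp only [qPoch, prod_range_add, pow_add, mul_assoc]

lemma qPoch_succ_left (x Q : ℂ) (n : ℕ) :
    qPoch x Q (n + 1) = (1 - x) * qPoch (x * Q) Q n := by
  rw [add_comm, qPoch_add, qPoch_succ, qPoch_zero, pow_zero, mul_one, one_mul, pow_one]

lemma qPoch_mul_qPoch_neg (x Q : ℂ) (n : ℕ) :
    qPoch x Q n * qPoch (-x) Q n = qPoch (x ^ 2) (Q ^ 2) n := by
  simp only [qPoch, ← prod_mul_distrib]
  exact prod_congr rfl fun j _ => by ring

lemma one_sub_mul_pow_ne_zero (hQ : ‖Q‖ < 1) (hx : ‖x‖ < 1) (n : ℕ) : 1 - x * Q ^ n ≠ 0 := by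
  refine sub_ne_zero.mpr fun h => ?_
  have hnorm : ‖x * Q ^ n‖ < 1 := by
    rw [norm_mul, norm_pow]
    exact mul_lt_one_of_nonneg_of_lt_one_left (norm_nonneg x) hx
      (pow_le_one₀ (norm_nonneg Q) hQ.le)
  simp [← h] at hnorm

lemma qPoch_ne_zero (hQ : ‖Q‖ < 1) (hx : ‖x‖ < 1) (n : ℕ) : qPoch x Q n ≠ 0 :=
  prod_ne_zero_iff.mpr fun j _ => one_sub_mul_pow_ne_zero hQ hx j

lemma norm_pow_lt_one (hx : ‖x‖ < 1) {n : ℕ} (hn : n ≠ 0) : ‖x ^ n‖ < 1 :=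
  norm_pow x n ▸ pow_lt_one₀ (norm_nonneg x) hx hn

lemma summable_norm_neg_mul_pow (hQ : ‖Q‖ < 1) (x : ℂ) : Summable fun j : ℕ => ‖-(x * Q ^ j)‖ := by
  simp only [norm_neg, norm_mul, norm_pow]
  exact (summable_geometric_of_lt_one (norm_nonneg Q) hQ).mul_left _

lemma tendsto_qPoch (hQ : ‖Q‖ < 1) (x : ℂ) :
    Tendsto (qPoch x Q) atTop (𝓝 (qPochInf x Q)) := by
  have h := (multipliable_one_add_of_summable
    (summable_norm_neg_mul_pow hQ x)).tendsto_prod_tprod_nat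
  simp only [← sub_eq_add_neg] at h
  exact h

lemma qPochInf_ne_zero (hQ : ‖Q‖ < 1) (hx : ‖x‖ < 1) : qPochInf x Q ≠ 0 := by
  have h := tprod_one_add_ne_zero_of_summable (f := fun j : ℕ => -(x * Q ^ j))
    (fun j => by simpa only [← sub_eq_add_neg] using one_sub_mul_pow_ne_zero hQ hx j)
    (summable_norm_neg_mul_pow hQ x)
  simp only [← sub_eq_add_neg] at h
  exact h

/-- The reciprocal `1 / (Q;Q)_m`, with the usual convention that it vanishes for `m < 0`. -/
noncomputable def invQPoch (Q : ℂ) (m : ℤ) : ℂ := if 0 ≤ m then (qPoch Q Q m.toNat)⁻¹ else 0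

lemma invQPoch_of_neg (Q : ℂ) {m : ℤ} (hm : m < 0) : invQPoch Q m = 0 := if_neg hm.not_ge

lemma invQPoch_natCast (Q : ℂ) (m : ℕ) : invQPoch Q m = (qPoch Q Q m)⁻¹ := by
  simp [invQPoch]

lemma invQPoch_natCast_add (Q : ℂ) (m j : ℕ) :
    invQPoch Q (m + j : ℕ) = invQPoch Q m * (qPoch (Q ^ (m + 1)) Q j)⁻¹ := by
  rw [invQPoch_natCast, invQPoch_natCast, qPoch_add, mul_inv, pow_succ']

lemma invQPoch_zero (Q : ℂ) : invQPoch Q 0 = 1 := by simp [invQPoch, qPoch_zero]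

lemma invQPoch_sub_one (hQ : ‖Q‖ < 1) (m : ℤ) :
    invQPoch Q (m - 1) = (1 - Q ^ m) * invQPoch Q m := by
  rcases lt_trichotomy m 0 with hm | rfl | hm
  · rw [invQPoch_of_neg Q hm, invQPoch_of_neg Q (by omega), mul_zero]
  · simp [invQPoch_of_neg]
  · obtain ⟨k, rfl⟩ : ∃ k : ℕ, m = (k + 1 : ℕ) := ⟨(m - 1).toNat, by omega⟩
    have hk := one_sub_mul_pow_ne_zero hQ hQ k
    rw [show ((k + 1 : ℕ) : ℤ) - 1 = k by push_cast; ring, invQPoch_natCast, invQPoch_natCast,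
      zpow_natCast, qPoch_succ, pow_succ', mul_inv]
    field_simp

lemma tendsto_invQPoch (hQ : ‖Q‖ < 1) (c : ℤ) :
    Tendsto (fun n : ℕ => invQPoch Q (n + c)) atTop (𝓝 (qPochInf Q Q)⁻¹) := by
  have hshift : Tendsto (fun n : ℕ => ((n : ℤ) + c).toNat) atTop atTop :=
    tendsto_atTop.mpr fun b => by
      filter_upwards [eventually_ge_atTop (b + c.natAbs)] with n hn
      omega
  refine (((tendsto_qPoch hQ Q).inv₀ (qPochInf_ne_zero hQ hQ)).comp hshift).congr' ?_
  filter_upwards [eventually_ge_atTop c.natAbs] with n hn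
  simp only [Function.comp_apply, invQPoch]
  rw [if_pos (by omega)]

lemma exists_norm_invQPoch_le (hQ : ‖Q‖ < 1) : ∃ C, ∀ m : ℤ, ‖invQPoch Q m‖ ≤ C := by
  obtain ⟨C, hC⟩ :=
    (Metric.isBounded_range_of_tendsto _ (tendsto_invQPoch hQ 0)).exists_norm_le
  have hnat (n : ℕ) : ‖invQPoch Q n‖ ≤ C := by
    simpa only [add_zero] using hC _ ⟨n, rfl⟩
  refine ⟨C, fun m => ?_⟩
  rcases lt_or_ge m 0 with hm | hm
  · rw [invQPoch_of_neg Q hm, norm_zero]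
    exact (norm_nonneg _).trans (hnat 0)
  · lift m to ℕ using hm
    exact hnat m

end QPochhammer

section QVandermonde

variable {Q x y : ℂ}

/-- The product `(ρ;Q)_j (-x)^j Q^(j(j-1)/2)` with `ρ = y / x`, the numerator of the
`q`-Chu–Vandermonde sum, written without division so that `x = 0` (that is, `ρ → ∞`) is allowed. -/
noncomputable def baileyWeight (Q x y : ℂ) (j : ℕ) : ℂ := ∏ l ∈ range j, (y * Q ^ l - x) * Q ^ l

lemma baileyWeight_zero (Q x y : ℂ) : baileyWeight Q x y 0 = 1 := prod_range_zero _

lemma baileyWeight_succ (Q x y : ℂ) (j : ℕ) :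
    baileyWeight Q x y (j + 1) = baileyWeight Q x y j * ((y * Q ^ j - x) * Q ^ j) :=
  prod_range_succ _ _

lemma baileyWeight_add (Q x y : ℂ) (r j : ℕ) :
    baileyWeight Q x y (r + j) =
      baileyWeight Q x y r * baileyWeight Q (x * Q ^ r) (y * Q ^ (2 * r)) j := by
  rw [baileyWeight, prod_range_add]
  exact congrArg _ (prod_congr rfl fun l _ => by ring)

lemma baileyWeight_succ_left (Q x y : ℂ) (j : ℕ) :
    baileyWeight Q x y (j + 1) = (y - x) * Q ^ j * baileyWeight Q x (y * Q) j := by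
  induction j with
  | zero => simp [baileyWeight]
  | succ j ih =>
    rw [baileyWeight_succ, ih, baileyWeight_succ]
    ring

lemma summable_norm_baileyWeight (hQ : ‖Q‖ < 1) (x y : ℂ) :
    Summable fun j => ‖baileyWeight Q x y j‖ := by
  have hpow : Tendsto (Q ^ · : ℕ → ℂ) atTop (𝓝 0) := tendsto_pow_atTop_nhds_zero_of_norm_lt_one hQ
  have hratio : Tendsto (fun j : ℕ => ‖(y * Q ^ j - x) * Q ^ j‖) atTop (𝓝 0) := by
    simpa using (((hpow.const_mul y).sub_const x).mul hpow).norm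
  refine summable_of_ratio_norm_eventually_le (r := 1 / 2) (by norm_num) ?_
  filter_upwards [hratio.eventually_le_const (show (0 : ℝ) < 1 / 2 by norm_num)] with j hj
  rw [norm_norm, norm_norm, baileyWeight_succ, norm_mul, mul_comm]
  gcongr

lemma sum_mul_invQPoch_succ (hQ : ‖Q‖ < 1) (f : ℕ → ℂ) (N : ℕ) :
    (1 - Q ^ (N + 1)) *
        ∑ j ∈ range (N + 2), f j * (invQPoch Q ((N + 1 : ℕ) - j) * invQPoch Q j) =
      ∑ j ∈ range (N + 1),
        (f j + Q ^ (N - j) * f (j + 1)) * (invQPoch Q (N - j) * invQPoch Q j) := by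
  have pascal : ∀ j ∈ range (N + 2),
      (1 - Q ^ (N + 1)) * (f j * (invQPoch Q ((N + 1 : ℕ) - j) * invQPoch Q j)) =
        f j * (invQPoch Q (N - j) * invQPoch Q j) +
          Q ^ (N + 1 - j) * f j * (invQPoch Q ((N + 1 : ℕ) - j) * invQPoch Q (j - 1)) := by
    intro j hj
    have hle : j ≤ N + 1 := by rw [mem_range] at hj; omega
    have hleft : invQPoch Q (N - j) =
        (1 - Q ^ (N + 1 - j)) * invQPoch Q ((N + 1 : ℕ) - j) := by
      rw [← zpow_natCast, Nat.cast_sub hle, ← invQPoch_sub_one hQ]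
      congr 1; push_cast; ring
    rw [hleft, invQPoch_sub_one hQ, zpow_natCast, ← pow_sub_mul_pow Q hle]
    ring
  rw [mul_sum, sum_congr rfl pascal, sum_add_distrib, sum_range_succ _ (N + 1),
    sum_range_succ' _ (N + 1), invQPoch_of_neg Q (show (N : ℤ) - (N + 1 : ℕ) < 0 by omega),
    invQPoch_of_neg Q (show ((0 : ℕ) : ℤ) - 1 < 0 by omega), zero_mul, mul_zero, mul_zero,
    mul_zero, add_zero, add_zero, ← sum_add_distrib]
  refine sum_congr rfl fun j _ => ?_
  rw [Nat.add_sub_add_right, show ((N + 1 : ℕ) : ℤ) - (j + 1 : ℕ) = N - j by push_cast; ring,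
    show ((j + 1 : ℕ) : ℤ) - 1 = j by push_cast; ring]
  ring

lemma sum_baileyWeight_mul_invQPoch_succ (hQ : ‖Q‖ < 1) (x y : ℂ) (N : ℕ) :
    (1 - Q ^ (N + 1)) * ∑ j ∈ range (N + 2),
        baileyWeight Q x y j * (qPoch y Q j)⁻¹ * (invQPoch Q ((N + 1 : ℕ) - j) * invQPoch Q j) =
      ∑ j ∈ range (N + 1),
          baileyWeight Q x y j * (qPoch y Q j)⁻¹ * (invQPoch Q (N - j) * invQPoch Q j) +
        Q ^ N * (y - x) * (1 - y)⁻¹ * ∑ j ∈ range (N + 1), baileyWeight Q x (y * Q) j *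
          (qPoch (y * Q) Q j)⁻¹ * (invQPoch Q (N - j) * invQPoch Q j) := by
  rw [sum_mul_invQPoch_succ hQ, mul_sum, ← sum_add_distrib]
  refine sum_congr rfl fun j hj => ?_
  rw [baileyWeight_succ_left, qPoch_succ_left, mul_inv,
    ← pow_sub_mul_pow Q (mem_range_succ_iff.mp hj)]
  ring

theorem q_chu_vandermonde (hQ : ‖Q‖ < 1) (hy : ‖y‖ < 1) (x : ℂ) (N : ℕ) :
    ∑ j ∈ range (N + 1),
        baileyWeight Q x y j * (qPoch y Q j)⁻¹ * (invQPoch Q (N - j) * invQPoch Q j) =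
      qPoch x Q N * (qPoch y Q N)⁻¹ * invQPoch Q N := by
  induction N generalizing y with
  | zero => simp [baileyWeight_zero, qPoch_zero, invQPoch_zero]
  | succ N ih =>
    have hyQ : ‖y * Q‖ < 1 := by
      rw [norm_mul]
      exact mul_lt_one_of_nonneg_of_lt_one_left (norm_nonneg y) hy hQ.le
    have hyN := one_sub_mul_pow_ne_zero hQ hy N
    have hQN : 1 - Q ^ (N + 1) ≠ 0 := by
      simpa only [pow_succ'] using one_sub_mul_pow_ne_zero hQ hQ N
    have hinv : invQPoch Q N = (1 - Q ^ (N + 1)) * invQPoch Q (N + 1 : ℕ) := by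
      rw [← zpow_natCast, ← invQPoch_sub_one hQ]
      congr 1; push_cast; ring
    have hsplit : (qPoch y Q N)⁻¹ = (1 - y * Q ^ N) * (qPoch y Q (N + 1))⁻¹ := by
      rw [qPoch_succ, mul_inv]
      field_simp
    have hsplit_left : (1 - y)⁻¹ * (qPoch (y * Q) Q N)⁻¹ = (qPoch y Q (N + 1))⁻¹ := by
      rw [qPoch_succ_left, mul_inv]
    refine mul_left_cancel₀ hQN ?_
    rw [sum_baileyWeight_mul_invQPoch_succ hQ, ih hy, ih hyQ, hinv, hsplit, qPoch_succ x]
    linear_combination (Q ^ N * (y - x) * qPoch x Q N * (1 - Q ^ (N + 1)) *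
      invQPoch Q (N + 1 : ℕ)) * hsplit_left

end QVandermonde

section BaileyTransform

variable {Q x : ℂ}

lemma sum_baileyWeight_mul_kernel (hQ : ‖Q‖ < 1) {e r : ℕ} {c : ℂ}
    (hc : c * qPoch x Q r = baileyWeight Q x (Q ^ (e + 1)) r) (n : ℕ) :
    ∑ s ∈ range (n + 1), baileyWeight Q x (Q ^ (e + 1)) s * invQPoch Q (n - s) *
        (invQPoch Q (s - r) * invQPoch Q (s + e + r)) =
      c * qPoch x Q n * (invQPoch Q (n - r) * invQPoch Q (n + e + r)) := by
  have hzero : ∀ s : ℕ, s < r → invQPoch Q (s - r) = 0 := fun s hs =>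
    invQPoch_of_neg Q (by omega)
  rcases lt_or_ge n r with hn | hn
  · rw [hzero n hn, zero_mul, mul_zero]
    refine sum_eq_zero fun s hs => ?_
    rw [hzero s (by rw [mem_range] at hs; omega), zero_mul, mul_zero]
  obtain ⟨N, rfl⟩ := Nat.exists_eq_add_of_le hn
  have hy : ‖Q ^ (e + 1 + 2 * r)‖ < 1 := norm_pow_lt_one hQ (by omega)
  have hkernel (j : ℕ) : invQPoch Q ((r + j : ℕ) + e + r) =
      invQPoch Q (e + 2 * r : ℕ) * (qPoch (Q ^ (e + 1 + 2 * r)) Q j)⁻¹ := by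
    rw [show e + 1 + 2 * r = e + 2 * r + 1 by ring, ← invQPoch_natCast_add]
    congr 1; push_cast; ring
  rw [add_assoc, sum_range_add, sum_eq_zero fun s hs => by
    rw [hzero s (mem_range.mp hs), zero_mul, mul_zero], zero_add, hkernel, qPoch_add,
    show ((r + N : ℕ) : ℤ) - r = N by push_cast; ring]
  have hvand := q_chu_vandermonde hQ hy (x * Q ^ r) N
  calc _ = baileyWeight Q x (Q ^ (e + 1)) r * invQPoch Q (e + 2 * r : ℕ) *
        ∑ j ∈ range (N + 1), baileyWeight Q (x * Q ^ r) (Q ^ (e + 1 + 2 * r)) j *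
          (qPoch (Q ^ (e + 1 + 2 * r)) Q j)⁻¹ * (invQPoch Q (N - j) * invQPoch Q j) := by
        rw [mul_sum]
        refine sum_congr rfl fun j _ => ?_
        rw [hkernel, baileyWeight_add, ← pow_add,
          show ((r + N : ℕ) : ℤ) - (r + j : ℕ) = N - j by push_cast; ring,
          show ((r + j : ℕ) : ℤ) - r = j by push_cast; ring]
        ring
    _ = _ := by
        rw [hvand, ← hc]
        ring

/-- The sequence `β_n = ∑_r α_r / ((Q;Q)_(n-r) (Q;Q)_(n+e+r))` that forms with `α` a bilateral
Bailey pair relative to `Q ^ e`; the sum over `r : ℤ` is finite. -/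
noncomputable def baileyTransform (Q : ℂ) (e : ℕ) (α : ℤ → ℂ) (n : ℕ) : ℂ :=
  ∑' r : ℤ, α r * (invQPoch Q (n - r) * invQPoch Q (n + e + r))

lemma baileyTransform_summand_eq_zero (Q : ℂ) (e : ℕ) (α : ℤ → ℂ) {n N : ℕ} (hn : n ≤ N) {r : ℤ}
    (hr : r ∉ Icc (-(N + e : ℤ)) N) :
    α r * (invQPoch Q (n - r) * invQPoch Q (n + e + r)) = 0 := by
  rw [mem_Icc, not_and_or, not_le, not_le] at hr
  rcases hr with hr | hr
  · rw [invQPoch_of_neg Q (show (n : ℤ) + e + r < 0 by omega), mul_zero, mul_zero]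
  · rw [invQPoch_of_neg Q (show (n : ℤ) - r < 0 by omega), zero_mul, mul_zero]

lemma baileyTransform_eq_sum (Q : ℂ) (e : ℕ) (α : ℤ → ℂ) {n N : ℕ} (hn : n ≤ N) :
    baileyTransform Q e α n = ∑ r ∈ Icc (-(N + e : ℤ)) N,
      α r * (invQPoch Q (n - r) * invQPoch Q (n + e + r)) :=
  tsum_eq_sum fun _ hr => baileyTransform_summand_eq_zero Q e α hn hr

/-- `c` is the factor by which Bailey's lemma with parameter `x`, relative to `Q ^ e`, multiplies a
sequence `α`. The reflection `r ↦ -e - r` is the symmetry of the kernel of `baileyTransform`. -/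
structure IsBaileyMultiplier (Q : ℂ) (e : ℕ) (x : ℂ) (c : ℤ → ℂ) : Prop where
  mul_qPoch : ∀ r : ℕ, c r * qPoch x Q r = baileyWeight Q x (Q ^ (e + 1)) r
  reflect : ∀ r : ℤ, c (-e - r) = c r

-- For `e ≤ 1` the reflection `r ↦ -e - r` maps every negative integer to a natural number.
lemma IsBaileyMultiplier.sum_mul_kernel (hQ : ‖Q‖ < 1) {e : ℕ} (he : e ≤ 1) {c : ℤ → ℂ}
    (hc : IsBaileyMultiplier Q e x c) (n : ℕ) (r : ℤ) :
    ∑ s ∈ range (n + 1), baileyWeight Q x (Q ^ (e + 1)) s * invQPoch Q (n - s) *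
        (invQPoch Q (s - r) * invQPoch Q (s + e + r)) =
      c r * qPoch x Q n * (invQPoch Q (n - r) * invQPoch Q (n + e + r)) := by
  rcases le_or_gt 0 r with hr | hr
  · lift r to ℕ using hr
    exact sum_baileyWeight_mul_kernel hQ (hc.mul_qPoch r) n
  · obtain ⟨m, rfl⟩ : ∃ m : ℕ, r = -e - m := ⟨(-e - r).toNat, by omega⟩
    have hsub (s : ℤ) : s - (-e - m) = s + e + m := by ring
    have hadd (s : ℤ) : s + e + (-e - m) = s - m := by ring
    simp only [hsub, hadd, hc.reflect]
    simpa only [mul_comm (invQPoch Q (_ - (m : ℤ)))] using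
      sum_baileyWeight_mul_kernel hQ (hc.mul_qPoch m) n

theorem bailey_lemma (hQ : ‖Q‖ < 1) {e : ℕ} (he : e ≤ 1) {c : ℤ → ℂ}
    (hc : IsBaileyMultiplier Q e x c) (α : ℤ → ℂ) (n : ℕ) :
    ∑ s ∈ range (n + 1), baileyWeight Q x (Q ^ (e + 1)) s * invQPoch Q (n - s) *
        baileyTransform Q e α s =
      qPoch x Q n * baileyTransform Q e (fun r => c r * α r) n := by
  rw [baileyTransform_eq_sum Q e _ le_rfl, mul_sum]
  calc _ = ∑ s ∈ range (n + 1), ∑ r ∈ Icc (-(n + e : ℤ)) n, α r *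
        (baileyWeight Q x (Q ^ (e + 1)) s * invQPoch Q (n - s) *
          (invQPoch Q (s - r) * invQPoch Q (s + e + r))) := by
        refine sum_congr rfl fun s hs => ?_
        rw [baileyTransform_eq_sum Q e α (mem_range_succ_iff.mp hs), mul_sum]
        exact sum_congr rfl fun r _ => by ring
    _ = _ := by
        rw [sum_comm]
        refine sum_congr rfl fun r _ => ?_
        rw [← mul_sum, hc.sum_mul_kernel hQ he]
        ring

lemma summable_baileyTransform_summand (Q : ℂ) (e : ℕ) (α : ℤ → ℂ) (n : ℕ) :
    Summable fun r : ℤ => α r * (invQPoch Q (n - r) * invQPoch Q (n + e + r)) :=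
  summable_of_ne_finset_zero fun _ hr => baileyTransform_summand_eq_zero Q e α le_rfl hr

lemma baileyTransform_zero_eq_one (hQ0 : Q ≠ 0) (hQ : ‖Q‖ < 1) {α : ℤ → ℂ}
    (hα : ∀ r, α (-1 - r) = -(Q ^ (2 * r + 1) * α r)) (n : ℕ) :
    baileyTransform Q 0 α n = baileyTransform Q 1 α n := by
  -- The kernels relative to `Q` and to `1` differ by the factor `1 - Q ^ (n + 1 + r)`; its second
  -- part contributes a sum that changes sign under `r ↦ -1 - r`.
  have hodd : ∑' r : ℤ, Q ^ (n + 1 + r) * α r *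
      (invQPoch Q (n - r) * invQPoch Q (n + (1 : ℕ) + r)) = 0 := by
    refine self_eq_neg.mp ?_
    have hexp (r : ℤ) : Q ^ (n + 1 + r) = Q ^ (n + 1 + (-1 - r)) * Q ^ (2 * r + 1) := by
      rw [← zpow_add₀ hQ0]
      ring_nf
    rw [← tsum_neg]
    refine ((Equiv.subLeft (-1 : ℤ)).tsum_eq _).symm.trans (tsum_congr fun r => ?_)
    rw [Equiv.subLeft_apply, hα, show (n : ℤ) - (-1 - r) = n + (1 : ℕ) + r by push_cast; ring,
      show (n : ℤ) + (1 : ℕ) + (-1 - r) = n - r by push_cast; ring, hexp r]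
    ring
  rw [← sub_zero (baileyTransform Q 1 α n), ← hodd, baileyTransform, baileyTransform,
    ← (summable_baileyTransform_summand Q 1 α n).tsum_sub
      (summable_baileyTransform_summand Q 1 (fun r => Q ^ (n + 1 + r) * α r) n)]
  refine tsum_congr fun r => ?_
  rw [show (n : ℤ) + (0 : ℕ) + r = n + (1 : ℕ) + r - 1 by push_cast; ring, invQPoch_sub_one hQ,
    Nat.cast_one]
  ring

lemma tendsto_baileyTransform (hQ : ‖Q‖ < 1) (e : ℕ) {α : ℤ → ℂ} (hα : Summable (‖α ·‖)) :
    Tendsto (baileyTransform Q e α) atTop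
      (𝓝 ((∑' r, α r) * ((qPochInf Q Q)⁻¹ * (qPochInf Q Q)⁻¹))) := by
  obtain ⟨C, hC⟩ := exists_norm_invQPoch_le hQ
  rw [← tsum_mul_right]
  refine tendsto_tsum_of_dominated_convergence (hα.mul_right (C * C)) (fun r => ?_)
    (Eventually.of_forall fun n r => ?_)
  · simp only [add_assoc, sub_eq_add_neg]
    exact ((tendsto_invQPoch hQ _).mul (tendsto_invQPoch hQ _)).const_mul _
  · rw [norm_mul, norm_mul]
    gcongr
    · exact (norm_nonneg _).trans (hC 0)
    · exact hC _
    · exact hC _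

lemma exists_norm_baileyTransform_le (hQ : ‖Q‖ < 1) (e : ℕ) {α : ℤ → ℂ}
    (hα : Summable (‖α ·‖)) : ∃ C, ∀ n, ‖baileyTransform Q e α n‖ ≤ C := by
  obtain ⟨C, hC⟩ :=
    (Metric.isBounded_range_of_tendsto _ (tendsto_baileyTransform hQ e hα)).exists_norm_le
  exact ⟨C, fun n => hC _ ⟨n, rfl⟩⟩

lemma tendsto_sum_mul_invQPoch (hQ : ‖Q‖ < 1) {f : ℕ → ℂ} (hf : Summable (‖f ·‖)) :
    Tendsto (fun n : ℕ => ∑ s ∈ range (n + 1), f s * invQPoch Q (n - s)) atTop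
      (𝓝 ((∑' s, f s) * (qPochInf Q Q)⁻¹)) := by
  obtain ⟨C, hC⟩ := exists_norm_invQPoch_le hQ
  have hsum (n : ℕ) : ∑ s ∈ range (n + 1), f s * invQPoch Q (n - s) =
      ∑' s : ℕ, f s * invQPoch Q (n - s) := by
    refine (tsum_eq_sum fun s hs => ?_).symm
    rw [invQPoch_of_neg Q (by rw [mem_range] at hs; omega), mul_zero]
  simp only [hsum, ← tsum_mul_right]
  refine tendsto_tsum_of_dominated_convergence (hf.mul_right C)
    (fun s => (tendsto_invQPoch hQ _).const_mul _) (Eventually.of_forall fun n s => ?_)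
  rw [norm_mul]
  gcongr
  exact hC _

theorem tsum_baileyWeight_mul_baileyTransform (hQ : ‖Q‖ < 1) {e : ℕ} (he : e ≤ 1) {c α : ℤ → ℂ}
    (hc : IsBaileyMultiplier Q e x c) (hα : Summable (‖α ·‖))
    (hcα : Summable fun r => ‖c r * α r‖) :
    ∑' s, baileyWeight Q x (Q ^ (e + 1)) s * baileyTransform Q e α s =
      qPochInf x Q / qPochInf Q Q * ∑' r, c r * α r := by
  have hβ : Summable fun s =>
      ‖baileyWeight Q x (Q ^ (e + 1)) s * baileyTransform Q e α s‖ := by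
    obtain ⟨C, hC⟩ := exists_norm_baileyTransform_le hQ e hα
    refine ((summable_norm_baileyWeight hQ x (Q ^ (e + 1))).mul_right C).of_nonneg_of_le
      (fun _ => norm_nonneg _) fun s => ?_
    rw [norm_mul]
    gcongr
    exact hC s
  have hlim := tendsto_nhds_unique (tendsto_sum_mul_invQPoch hQ hβ)
    (((tendsto_qPoch hQ x).mul (tendsto_baileyTransform hQ e hcα)).congr fun n => by
      rw [← bailey_lemma hQ he hc]
      exact sum_congr rfl fun s _ => by ring)
  refine mul_right_cancel₀ (inv_ne_zero (qPochInf_ne_zero hQ hQ)) (hlim.trans ?_)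
  ring

lemma baileyWeight_zero_left (Q : ℂ) (e s : ℕ) :
    baileyWeight Q 0 (Q ^ (e + 1)) s = Q ^ (s ^ 2 + e * s) := by
  induction s with
  | zero => simp [baileyWeight_zero]
  | succ s ih =>
    rw [baileyWeight_succ, ih]
    ring

lemma baileyWeight_neg_pow (q : ℂ) (e s : ℕ) :
    baileyWeight (q ^ 2) (-q ^ (e + 1)) ((q ^ 2) ^ (e + 1)) s =
      q ^ (s ^ 2 + e * s) * qPoch (-q ^ (e + 1)) (q ^ 2) s := by
  induction s with
  | zero => simp [baileyWeight_zero, qPoch_zero]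
  | succ s ih =>
    rw [baileyWeight_succ, qPoch_succ, ih]
    ring

lemma isBaileyMultiplier_zero (Q : ℂ) (e : ℕ) :
    IsBaileyMultiplier Q e 0 fun r => Q ^ (r ^ 2 + e * r) where
  mul_qPoch r := by
    rw [baileyWeight_zero_left, qPoch_zero_left, mul_one]
    norm_cast
  reflect r := by ring_nf

lemma isBaileyMultiplier_neg_pow (q : ℂ) (e : ℕ) :
    IsBaileyMultiplier (q ^ 2) e (-q ^ (e + 1)) fun r => q ^ (r ^ 2 + e * r) where
  mul_qPoch r := by
    rw [baileyWeight_neg_pow]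
    norm_cast
  reflect r := by ring_nf

end BaileyTransform

section JacobiTripleProduct

variable {p z : ℂ}

lemma baileyWeight_zero_right (p z : ℂ) (j : ℕ) :
    baileyWeight (p ^ 2) (p * z) 0 j = (-z) ^ j * p ^ (j ^ 2) := by
  induction j with
  | zero => simp [baileyWeight_zero]
  | succ j ih =>
    rw [baileyWeight_succ, ih]
    ring

lemma qPoch_reverse (hp : p ≠ 0) (hz : z ≠ 0) (n : ℕ) :
    qPoch (p * (z / p ^ (2 * n))) (p ^ 2) n * p ^ (n ^ 2) =
      (-z) ^ n * qPoch (p / z) (p ^ 2) n := by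
  induction n with
  | zero => simp [qPoch_zero]
  | succ n ih =>
    have hfactor : (1 - p * (z / p ^ (2 * (n + 1)))) * p ^ (2 * n + 1) =
        -z * (1 - p / z * (p ^ 2) ^ n) := by
      field_simp
      ring
    have hshift : p * (z / p ^ (2 * (n + 1))) * p ^ 2 = p * (z / p ^ (2 * n)) := by
      field_simp
      ring
    rw [qPoch_succ_left, hshift, qPoch_succ, add_sq]
    linear_combination qPoch (p * (z / p ^ (2 * n))) (p ^ 2) n * p ^ (n ^ 2) * hfactor +
      -z * (1 - p / z * (p ^ 2) ^ n) * ih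

lemma summable_norm_neg_zpow_mul_zpow_sq (hp : ‖p‖ < 1) (z : ℂ) :
    Summable fun r : ℤ => ‖(-z) ^ r * p ^ (r ^ 2)‖ := by
  have hnat (w : ℂ) : Summable fun j : ℕ => ‖(-w) ^ j * p ^ (j ^ 2)‖ := by
    simpa only [baileyWeight_zero_right] using
      summable_norm_baileyWeight (norm_pow_lt_one hp two_ne_zero) (p * w) 0
  refine .of_nat_of_neg ((hnat z).congr fun j => ?_) ((hnat z⁻¹).congr fun j => ?_)
  · norm_cast
  · rw [zpow_neg, zpow_natCast, neg_sq, ← inv_pow, ← inv_neg]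
    norm_cast

lemma baileyTransform_zero_eq_sum_range (Q : ℂ) (α : ℤ → ℂ) (n : ℕ) :
    baileyTransform Q 0 α n = ∑ j ∈ range (2 * n + 1),
      α (j - n) * (invQPoch Q ((2 * n : ℕ) - j) * invQPoch Q j) := by
  rw [baileyTransform_eq_sum _ _ _ le_rfl]
  refine sum_nbij' (fun r => (r + n).toNat) (fun j => j - n)
    (by simp only [mem_Icc, mem_range]; omega) (by simp only [mem_Icc, mem_range]; omega)
    (by simp only [mem_Icc]; omega) (fun j _ => by omega) fun r hr => ?_
  rw [mem_Icc] at hr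
  rw [Int.toNat_of_nonneg (by omega)]
  push_cast
  ring_nf

lemma baileyTransform_jacobi (hp0 : p ≠ 0) (hp : ‖p‖ < 1) (hz : z ≠ 0) (n : ℕ) :
    baileyTransform (p ^ 2) 0 (fun r => (-z) ^ r * p ^ (r ^ 2)) n =
      qPoch (p * z) (p ^ 2) n * qPoch (p / z) (p ^ 2) n * invQPoch (p ^ 2) (2 * n : ℕ) := by
  have hvand := q_chu_vandermonde (norm_pow_lt_one hp two_ne_zero) (y := 0) (by simp)
    (p * (z / p ^ (2 * n))) (2 * n)
  have hcoeff (j : ℕ) : (-z) ^ n * ((-z) ^ (j - n : ℤ) * p ^ ((j - n : ℤ) ^ 2)) =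
      p ^ (n ^ 2) * baileyWeight (p ^ 2) (p * (z / p ^ (2 * n))) 0 j := by
    rw [baileyWeight_zero_right, show ((j : ℤ) - n) ^ 2 = j ^ 2 + n ^ 2 - 2 * n * j by ring,
      zpow_sub₀ (neg_ne_zero.mpr hz), zpow_sub₀ hp0, zpow_add₀ hp0, ← neg_div, div_pow, ← pow_mul]
    have hpow := pow_ne_zero n (neg_ne_zero.mpr hz)
    norm_cast
    field_simp
  refine mul_left_cancel₀ (pow_ne_zero n (neg_ne_zero.mpr hz)) ?_
  calc _ = p ^ (n ^ 2) * ∑ j ∈ range (2 * n + 1),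
        baileyWeight (p ^ 2) (p * (z / p ^ (2 * n))) 0 j * (qPoch 0 (p ^ 2) j)⁻¹ *
          (invQPoch (p ^ 2) ((2 * n : ℕ) - j) * invQPoch (p ^ 2) j) := by
        rw [baileyTransform_zero_eq_sum_range, mul_sum, mul_sum]
        refine sum_congr rfl fun j _ => ?_
        rw [← mul_assoc, hcoeff, qPoch_zero_left, inv_one, mul_one, mul_assoc]
    _ = qPoch (p * (z / p ^ (2 * n))) (p ^ 2) n * p ^ (n ^ 2) * qPoch (p * z) (p ^ 2) n *
        invQPoch (p ^ 2) (2 * n : ℕ) := by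
        have hmid : p * (z / p ^ (2 * n)) * (p ^ 2) ^ n = p * z := by
          rw [← pow_mul]
          field_simp
        rw [hvand, qPoch_zero_left, two_mul n, qPoch_add, ← two_mul, hmid]
        ring
    _ = _ := by
        rw [qPoch_reverse hp0 hz]
        ring

theorem jacobi_triple_product (hp0 : p ≠ 0) (hp : ‖p‖ < 1) (hz : z ≠ 0) :
    ∑' r : ℤ, (-z) ^ r * p ^ (r ^ 2) =
      qPochInf (p ^ 2) (p ^ 2) * qPochInf (p * z) (p ^ 2) * qPochInf (p / z) (p ^ 2) := by
  have hQ := norm_pow_lt_one hp two_ne_zero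
  have hinv : Tendsto (fun n : ℕ => invQPoch (p ^ 2) (2 * n : ℕ)) atTop
      (𝓝 (qPochInf (p ^ 2) (p ^ 2))⁻¹) := by
    have htwo : Tendsto (fun n : ℕ => 2 * n) atTop atTop := tendsto_id.const_mul_atTop' two_pos
    have hlim := tendsto_invQPoch hQ 0
    simp only [add_zero] at hlim
    exact hlim.comp htwo
  have hlim := tendsto_nhds_unique
    (tendsto_baileyTransform hQ 0 (summable_norm_neg_zpow_mul_zpow_sq hp z))
    ((((tendsto_qPoch hQ (p * z)).mul (tendsto_qPoch hQ (p / z))).mul hinv).congr fun n =>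
      (baileyTransform_jacobi hp0 hp hz n).symm)
  have hP := qPochInf_ne_zero hQ hQ
  refine mul_right_cancel₀ (mul_ne_zero (inv_ne_zero hP) (inv_ne_zero hP)) (hlim.trans ?_)
  field_simp

end JacobiTripleProduct

section BaileyChain

variable {q : ℂ}

/-- The general term `(-1)^r q^(A r^2 + B r)` of a theta series. -/
noncomputable def thetaCoeff (q : ℂ) (A : ℕ) (B r : ℤ) : ℂ := (-1) ^ r * q ^ (A * r ^ 2 + B * r)

lemma thetaCoeff_eq_jacobi (hq0 : q ≠ 0) (A : ℕ) (B r : ℤ) :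
    thetaCoeff q A B r = (-q ^ B) ^ r * (q ^ A) ^ (r ^ 2) := by
  rw [thetaCoeff, neg_eq_neg_one_mul (q ^ B), mul_zpow, zpow_add₀ hq0, zpow_mul, zpow_mul,
    zpow_natCast]
  ring

lemma zpow_mul_thetaCoeff (hq0 : q ≠ 0) (A a : ℕ) (B b r : ℤ) :
    q ^ (a * r ^ 2 + b * r) * thetaCoeff q A B r = thetaCoeff q (A + a) (B + b) r := by
  rw [thetaCoeff, thetaCoeff, mul_left_comm, ← zpow_add₀ hq0]
  push_cast
  ring_nf

lemma thetaCoeff_neg_one_sub (hq0 : q ≠ 0) {A : ℕ} {B : ℤ} (hAB : A = B + 2) (r : ℤ) :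
    thetaCoeff q A B (-1 - r) = -((q ^ 2) ^ (2 * r + 1) * thetaCoeff q A B r) := by
  have hsign : (-1 : ℂ) ^ (-1 - r) = -(-1) ^ r := by
    rw [zpow_sub₀ (by norm_num), zpow_neg_one, inv_neg_one, div_eq_mul_inv, ← inv_zpow,
      inv_neg_one, neg_one_mul]
  rw [← zpow_natCast q 2, ← zpow_mul, thetaCoeff, thetaCoeff, hsign, hAB, mul_left_comm,
    ← zpow_add₀ hq0, neg_mul]
  push_cast
  ring_nf

lemma summable_norm_thetaCoeff (hq0 : q ≠ 0) (hq : ‖q‖ < 1) {A : ℕ} (hA : A ≠ 0) (B : ℤ) :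
    Summable fun r => ‖thetaCoeff q A B r‖ := by
  simpa only [thetaCoeff_eq_jacobi hq0] using
    summable_norm_neg_zpow_mul_zpow_sq (norm_pow_lt_one hq hA) (q ^ B)

lemma tsum_thetaCoeff (hq0 : q ≠ 0) (hq : ‖q‖ < 1) {A u v : ℕ} (hA : A ≠ 0) {B : ℤ}
    (hu : (u : ℤ) = A - B) (hv : (v : ℤ) = A + B) :
    ∑' r, thetaCoeff q A B r =
      qPochInf (q ^ (2 * A)) (q ^ (2 * A)) * qPochInf (q ^ u) (q ^ (2 * A)) *
        qPochInf (q ^ v) (q ^ (2 * A)) := by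
  simp only [thetaCoeff_eq_jacobi hq0]
  rw [jacobi_triple_product (pow_ne_zero A hq0) (norm_pow_lt_one hq hA) (zpow_ne_zero B hq0),
    ← pow_mul, mul_comm A 2, ← zpow_natCast q A, ← zpow_add₀ hq0, ← zpow_sub₀ hq0, ← hu, ← hv,
    zpow_natCast, zpow_natCast, mul_right_comm]

lemma baileyTransform_thetaCoeff_one_neg_one (hq0 : q ≠ 0) (hq : ‖q‖ < 1) (n : ℕ) :
    baileyTransform (q ^ 2) 1 (thetaCoeff q 1 (-1)) n = if n = 0 then 1 else 0 := by
  have hjacobi := baileyTransform_jacobi hq0 hq (inv_ne_zero hq0) n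
  rw [← baileyTransform_zero_eq_one (pow_ne_zero 2 hq0) (norm_pow_lt_one hq two_ne_zero)
    (thetaCoeff_neg_one_sub hq0 (by norm_num)), funext (thetaCoeff_eq_jacobi hq0 1 (-1))]
  simp only [zpow_neg_one, pow_one]
  rw [hjacobi]
  rcases n with _ | n
  · simp [qPoch_zero, invQPoch_zero]
  · rw [qPoch_succ_left, mul_inv_cancel₀ hq0, sub_self, zero_mul, zero_mul, zero_mul,
      if_neg n.succ_ne_zero]

lemma baileyTransform_thetaCoeff_two_zero (hq0 : q ≠ 0) (hq : ‖q‖ < 1) (n : ℕ) :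
    baileyTransform (q ^ 2) 1 (thetaCoeff q 2 0) n = (qPoch (q ^ 4) (q ^ 4) n)⁻¹ := by
  have hlemma := bailey_lemma (norm_pow_lt_one hq two_ne_zero) le_rfl
    (isBaileyMultiplier_neg_pow q 1) (thetaCoeff q 1 (-1)) n
  have hcoeff (r : ℤ) : q ^ (r ^ 2 + (1 : ℕ) * r) * thetaCoeff q 1 (-1) r = thetaCoeff q 2 0 r := by
    simpa using zpow_mul_thetaCoeff hq0 1 1 (-1) 1 r
  simp only [baileyTransform_thetaCoeff_one_neg_one hq0 hq, hcoeff, one_add_one_eq_two] at hlemma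
  rw [sum_eq_single_of_mem 0 (by simp) fun s _ hs => by rw [if_neg hs, mul_zero],
    baileyWeight_zero, if_pos rfl, one_mul, mul_one, Nat.cast_zero, sub_zero,
    invQPoch_natCast] at hlemma
  have hne : qPoch (q ^ 2) (q ^ 2) n ≠ 0 :=
    qPoch_ne_zero (norm_pow_lt_one hq two_ne_zero) (norm_pow_lt_one hq two_ne_zero) n
  rw [show q ^ 4 = (q ^ 2) ^ 2 by ring, ← qPoch_mul_qPoch_neg]
  refine eq_inv_of_mul_eq_one_right ?_
  rw [mul_assoc, ← hlemma, mul_inv_cancel₀ hne]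

lemma tsum_baileyWeight_mul_baileyTransform_thetaCoeff (hq0 : q ≠ 0) (hq : ‖q‖ < 1) {A : ℕ}
    (hA : A ≠ 0) (B : ℤ) :
    ∑' n, baileyWeight (q ^ 2) (-q) (q ^ 2) n * baileyTransform (q ^ 2) 0 (thetaCoeff q A B) n =
      qPochInf (-q) (q ^ 2) / qPochInf (q ^ 2) (q ^ 2) * ∑' r, thetaCoeff q (A + 1) B r := by
  have hcoeff (r : ℤ) : q ^ (r ^ 2 + (0 : ℕ) * r) * thetaCoeff q A B r =
      thetaCoeff q (A + 1) B r := by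
    simpa using zpow_mul_thetaCoeff hq0 A 1 B 0 r
  have hlemma := tsum_baileyWeight_mul_baileyTransform (norm_pow_lt_one hq two_ne_zero) zero_le_one
    (isBaileyMultiplier_neg_pow q 0) (summable_norm_thetaCoeff hq0 hq hA B)
    (by simpa only [hcoeff] using summable_norm_thetaCoeff hq0 hq A.succ_ne_zero B)
  simpa only [hcoeff, zero_add, pow_one] using hlemma

/-- One step of the Bailey chain relative to `Q ^ e`, with both parameters sent to infinity: the
sequence `β` of a Bailey pair is replaced by that of the next pair. -/
noncomputable def baileyStep (Q : ℂ) (e : ℕ) (β : ℕ → ℂ) (n : ℕ) : ℂ :=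
  ∑ s ∈ range (n + 1), Q ^ (s ^ 2 + e * s) * invQPoch Q (n - s) * β s

lemma baileyStep_baileyTransform (hq0 : q ≠ 0) (hq : ‖q‖ < 1) {e : ℕ} (he : e ≤ 1) (A : ℕ)
    (B : ℤ) :
    baileyStep (q ^ 2) e (baileyTransform (q ^ 2) e (thetaCoeff q A B)) =
      baileyTransform (q ^ 2) e (thetaCoeff q (A + 2) (B + 2 * e)) := by
  funext n
  have hlemma := bailey_lemma (norm_pow_lt_one hq two_ne_zero) he
    (isBaileyMultiplier_zero (q ^ 2) e) (thetaCoeff q A B) n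
  have hcoeff (r : ℤ) : (q ^ 2) ^ (r ^ 2 + e * r) * thetaCoeff q A B r =
      thetaCoeff q (A + 2) (B + 2 * e) r := by
    rw [← zpow_mul_thetaCoeff hq0, ← zpow_natCast q 2, ← zpow_mul]
    push_cast
    ring_nf
  simp only [baileyWeight_zero_left, qPoch_zero_left, one_mul, hcoeff] at hlemma
  exact hlemma

lemma baileyStep_iterate_baileyTransform (hq0 : q ≠ 0) (hq : ‖q‖ < 1) {e : ℕ} (he : e ≤ 1)
    (A : ℕ) (B : ℤ) (m : ℕ) :
    (baileyStep (q ^ 2) e)^[m] (baileyTransform (q ^ 2) e (thetaCoeff q A B)) =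
      baileyTransform (q ^ 2) e (thetaCoeff q (A + 2 * m) (B + 2 * e * m)) := by
  induction m with
  | zero => simp
  | succ m ih =>
    rw [Function.iterate_succ_apply', ih, baileyStep_baileyTransform hq0 hq he]
    push_cast
    ring_nf

/-- The `m`-fold Bailey chain applied to `β`, whose `j`-th step counted from the outside is taken
relative to `Q ^ e j`. -/
noncomputable def baileyChain (Q : ℂ) : ℕ → (ℕ → ℕ) → (ℕ → ℂ) → ℕ → ℂ
  | 0, _, β => β
  | m + 1, e, β => baileyStep Q (e 0) (baileyChain Q m (fun j => e (j + 1)) β)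

lemma baileyChain_add (Q : ℂ) (a d : ℕ) (e : ℕ → ℕ) (β : ℕ → ℂ) :
    baileyChain Q (a + d) e β = baileyChain Q a e (baileyChain Q d (fun j => e (a + j)) β) := by
  induction a generalizing e with
  | zero => simp [baileyChain]
  | succ a ih =>
    simp only [Nat.succ_add, baileyChain, ih]

lemma baileyChain_eq_iterate (Q : ℂ) {m : ℕ} {e : ℕ → ℕ} {c : ℕ} (he : ∀ j < m, e j = c)
    (β : ℕ → ℂ) : baileyChain Q m e β = (baileyStep Q c)^[m] β := by
  induction m generalizing e with
  | zero => rfl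
  | succ m ih =>
    rw [Function.iterate_succ_apply', ← ih fun j hj => he (j + 1) (by omega), baileyChain,
      he 0 m.succ_pos]

theorem baileyChain_inv_qPoch (hq0 : q ≠ 0) (hq : ‖q‖ < 1) (a d : ℕ) :
    baileyChain (q ^ 2) (a + d) (fun j => if j < a then 0 else 1)
        (fun n => (qPoch (q ^ 4) (q ^ 4) n)⁻¹) =
      baileyTransform (q ^ 2) 0 (thetaCoeff q (2 * (a + d + 1)) (2 * d)) := by
  have hinner : baileyChain (q ^ 2) d (fun j => if a + j < a then 0 else 1)
      (fun n => (qPoch (q ^ 4) (q ^ 4) n)⁻¹) =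
        baileyTransform (q ^ 2) 1 (thetaCoeff q (2 + 2 * d) (2 * d)) := by
    rw [baileyChain_eq_iterate (c := 1) _ fun j _ => if_neg (by omega),
      ← funext (baileyTransform_thetaCoeff_two_zero hq0 hq),
      baileyStep_iterate_baileyTransform hq0 hq le_rfl]
    simp
  have hswitch := funext (baileyTransform_zero_eq_one (pow_ne_zero 2 hq0)
    (norm_pow_lt_one hq two_ne_zero) (thetaCoeff_neg_one_sub hq0 (A := 2 + 2 * d)
      (B := 2 * d) (by push_cast; ring)))
  rw [baileyChain_add, hinner, ← hswitch, baileyChain_eq_iterate (c := 0) _ fun j hj => if_pos hj,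
    baileyStep_iterate_baileyTransform hq0 hq zero_le_one]
  simp only [Nat.cast_zero, mul_zero, zero_mul, add_zero]
  ring_nf

end BaileyChain

section Multisum

/-- The tuple `s` as a sequence, padded by zeros. -/
def extendZero {k : ℕ} (s : Fin k → ℕ) (m : ℕ) : ℕ := if h : m < k then s ⟨m, h⟩ else 0

lemma extendZero_of_lt {k : ℕ} (s : Fin k → ℕ) {m : ℕ} (hm : m < k) :
    extendZero s m = s ⟨m, hm⟩ := dif_pos hm

lemma extendZero_cons_zero {k : ℕ} (a : ℕ) (s : Fin k → ℕ) :
    extendZero (Fin.cons a s : Fin (k + 1) → ℕ) 0 = a := rfl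

lemma extendZero_cons_succ {k : ℕ} (a : ℕ) (s : Fin k → ℕ) (m : ℕ) :
    extendZero (Fin.cons a s : Fin (k + 1) → ℕ) (m + 1) = extendZero s m := by
  simp only [extendZero, Nat.succ_lt_succ_iff]
  rfl

lemma extendZero_succ_le {k : ℕ} {s : Fin k → ℕ} (hs : Antitone s) {m : ℕ} (hm : m + 1 < k) :
    extendZero s (m + 1) ≤ extendZero s m := by
  rw [extendZero_of_lt s hm, extendZero_of_lt s (m.lt_succ_self.trans hm)]
  exact hs m.le_succ

/-- The term of the iterated sum `baileyChain Q m e β (t 0)` whose summation indices are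
`t 1, …, t m`. -/
noncomputable def baileyChainTerm (Q : ℂ) (m : ℕ) (e : ℕ → ℕ) (β : ℕ → ℂ) (t : ℕ → ℕ) : ℂ :=
  (∏ j ∈ range m, Q ^ (t (j + 1) ^ 2 + e j * t (j + 1)) * invQPoch Q (t j - t (j + 1))) * β (t m)

variable {Q : ℂ} {β : ℕ → ℂ} {C : ℝ}

lemma baileyChainTerm_cons (Q : ℂ) (m : ℕ) (e : ℕ → ℕ) (β : ℕ → ℂ) (a : ℕ)
    (s : Fin (m + 1) → ℕ) :
    baileyChainTerm Q (m + 1) e β (extendZero (Fin.cons a s : Fin (m + 2) → ℕ)) =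
      Q ^ (extendZero s 0 ^ 2 + e 0 * extendZero s 0) * invQPoch Q (a - extendZero s 0) *
        baileyChainTerm Q m (fun j => e (j + 1)) β (extendZero s) := by
  rw [baileyChainTerm, baileyChainTerm, prod_range_succ']
  simp only [extendZero_cons_succ, extendZero_cons_zero]
  ring

lemma baileyChainTerm_eq_zero (Q : ℂ) {m : ℕ} (e : ℕ → ℕ) (β : ℕ → ℂ) {s : Fin (m + 1) → ℕ}
    (hs : ¬ Antitone s) : baileyChainTerm Q m e β (extendZero s) = 0 := by
  rw [Fin.antitone_iff_succ_le, not_forall] at hs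
  obtain ⟨j, hj⟩ := hs
  have hlt : extendZero s j < extendZero s (j + 1) := by
    rw [extendZero_of_lt s (by omega), extendZero_of_lt s (by omega)]
    exact not_le.mp hj
  rw [baileyChainTerm, prod_eq_zero (mem_range.mpr j.isLt), zero_mul]
  rw [invQPoch_of_neg Q (by omega), mul_zero]

lemma summable_norm_pow_sq (hQ : ‖Q‖ < 1) (e : ℕ) :
    Summable fun b : ℕ => ‖Q ^ (b ^ 2 + e * b)‖ := by
  simpa only [baileyWeight_zero_left] using summable_norm_baileyWeight hQ 0 (Q ^ (e + 1))

lemma summable_norm_mul_baileyChainTerm (hQ : ‖Q‖ < 1) (hβ : ∀ n, ‖β n‖ ≤ C) (m : ℕ) (e : ℕ → ℕ)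
    {g : ℕ → ℂ} (hg : Summable (‖g ·‖)) :
    Summable fun s : Fin (m + 1) → ℕ =>
      ‖g (extendZero s 0) * baileyChainTerm Q m e β (extendZero s)‖ := by
  induction m generalizing e g with
  | zero =>
    refine ((Equiv.funUnique (Fin 1) ℕ).summable_iff (f := fun a => ‖g a * β a‖)).mpr ?_ |>.congr
      fun s => ?_
    · refine (hg.mul_right C).of_nonneg_of_le (fun _ => norm_nonneg _) fun a => ?_
      rw [norm_mul]
      gcongr
      exact hβ a
    · simp [baileyChainTerm, extendZero]
  | succ m ih =>
    obtain ⟨D, hD⟩ := exists_norm_invQPoch_le hQ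
    have hprod := (hg.mul_of_nonneg (ih (fun j => e (j + 1)) (summable_norm_pow_sq hQ (e 0)))
      (fun _ => norm_nonneg _) (fun _ => norm_nonneg _)).mul_right D
    refine (Fin.consEquiv fun _ => ℕ).summable_iff.mp
      (hprod.of_nonneg_of_le (fun _ => norm_nonneg _) fun ⟨a, s⟩ => ?_)
    calc ‖g a * baileyChainTerm Q (m + 1) e β (extendZero (Fin.cons a s : Fin (m + 2) → ℕ))‖
      _ = ‖g a‖ * (‖Q ^ (extendZero s 0 ^ 2 + e 0 * extendZero s 0)‖ *
          ‖baileyChainTerm Q m (fun j => e (j + 1)) β (extendZero s)‖) *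
            ‖invQPoch Q (a - extendZero s 0)‖ := by
        rw [baileyChainTerm_cons]
        simp only [norm_mul]
        ring
      _ ≤ _ := by
        rw [← norm_mul (Q ^ _)]
        gcongr
        exact hD _

lemma tsum_mul_baileyChainTerm (hQ : ‖Q‖ < 1) (hβ : ∀ n, ‖β n‖ ≤ C) (m : ℕ) (e : ℕ → ℕ)
    {g : ℕ → ℂ} (hg : Summable (‖g ·‖)) :
    ∑' s : Fin (m + 1) → ℕ, g (extendZero s 0) * baileyChainTerm Q m e β (extendZero s) =
      ∑' a, g a * baileyChain Q m e β a := by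
  induction m generalizing e g with
  | zero =>
    rw [← (Equiv.funUnique (Fin 1) ℕ).tsum_eq]
    exact tsum_congr fun s => by simp [baileyChainTerm, baileyChain, extendZero]
  | succ m ih =>
    have hkernel (a : ℕ) : Summable fun b : ℕ =>
        ‖Q ^ (b ^ 2 + e 0 * b) * invQPoch Q (a - b)‖ := by
      obtain ⟨D, hD⟩ := exists_norm_invQPoch_le hQ
      refine ((summable_norm_pow_sq hQ (e 0)).mul_right D).of_nonneg_of_le
        (fun _ => norm_nonneg _) fun b => ?_
      rw [norm_mul]
      gcongr
      exact hD _
    have hsummable := (Fin.consEquiv fun _ => ℕ).summable_iff.mpr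
      (summable_norm_mul_baileyChainTerm hQ hβ (m + 1) e hg).of_norm
    rw [← (Fin.consEquiv fun _ => ℕ).tsum_eq]
    refine hsummable.tsum_prod.trans (tsum_congr fun a => ?_)
    have hcons (s : Fin (m + 1) → ℕ) : g (extendZero (Fin.cons a s : Fin (m + 2) → ℕ) 0) *
        baileyChainTerm Q (m + 1) e β (extendZero (Fin.cons a s : Fin (m + 2) → ℕ)) = g a *
          (Q ^ (extendZero s 0 ^ 2 + e 0 * extendZero s 0) * invQPoch Q (a - extendZero s 0) *
            baileyChainTerm Q m (fun j => e (j + 1)) β (extendZero s)) := by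
      rw [baileyChainTerm_cons, extendZero_cons_zero]
    refine (tsum_congr hcons).trans ?_
    rw [tsum_mul_left, ih (fun j => e (j + 1)) (hkernel a), baileyChain, baileyStep]
    refine congrArg _ (tsum_eq_sum fun b hb => ?_)
    rw [invQPoch_of_neg Q (by rw [mem_range] at hb; omega), mul_zero, zero_mul]

theorem tsum_antitone_mul_baileyChainTerm (hQ : ‖Q‖ < 1) (hβ : ∀ n, ‖β n‖ ≤ C) (m : ℕ)
    (e : ℕ → ℕ) {g : ℕ → ℂ} (hg : Summable (‖g ·‖)) :
    ∑' s : {s : Fin (m + 1) → ℕ // Antitone s},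
        g (extendZero s.1 0) * baileyChainTerm Q m e β (extendZero s.1) =
      ∑' a, g a * baileyChain Q m e β a := by
  rw [← tsum_mul_baileyChainTerm hQ hβ m e hg]
  refine tsum_subtype_eq_of_support_subset (s := {s | Antitone s})
    (f := fun s => g (extendZero s 0) * baileyChainTerm Q m e β (extendZero s)) fun s hs => ?_
  by_contra hanti
  exact hs (mul_eq_zero_of_right _ (baileyChainTerm_eq_zero Q e β hanti))

lemma sum_Ico_eq_sum_ite (a d : ℕ) (t : ℕ → ℕ) :
    ∑ m ∈ Ico (a + 1) (a + d + 1), t m =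
      ∑ j ∈ range (a + d), (if j < a then 0 else 1) * t (j + 1) := by
  rw [sum_Ico_eq_sum_range, show a + d + 1 - (a + 1) = d by omega, sum_range_add,
    sum_eq_zero (s := range a) fun j hj => by rw [if_pos (mem_range.mp hj), zero_mul], zero_add]
  refine sum_congr rfl fun j _ => ?_
  rw [if_neg (by omega), one_mul, Nat.add_right_comm]

lemma baileyWeight_mul_baileyChainTerm (q : ℂ) (a d : ℕ) {t : ℕ → ℕ}
    (ht : ∀ j < a + d, t (j + 1) ≤ t j) :
    baileyWeight (q ^ 2) (-q) (q ^ 2) (t 0) * baileyChainTerm (q ^ 2) (a + d)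
        (fun j => if j < a then 0 else 1) (fun n => (qPoch (q ^ 4) (q ^ 4) n)⁻¹) t =
      qPoch (-q) (q ^ 2) (t 0) *
        q ^ ((t 0) ^ 2 + 2 * ∑ m ∈ Ico 1 (a + d + 1), (t m) ^ 2 +
          2 * ∑ m ∈ Ico (a + 1) (a + d + 1), t m) /
        ((∏ m ∈ range (a + d), qPoch (q ^ 2) (q ^ 2) (t m - t (m + 1))) *
          qPoch (q ^ 4) (q ^ 4) (t (a + d))) := by
  have hweight : baileyWeight (q ^ 2) (-q) (q ^ 2) (t 0) =
      q ^ (t 0 ^ 2) * qPoch (-q) (q ^ 2) (t 0) := by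
    simpa using baileyWeight_neg_pow q 0 (t 0)
  have hinv : ∏ j ∈ range (a + d), invQPoch (q ^ 2) (t j - t (j + 1)) =
      (∏ j ∈ range (a + d), qPoch (q ^ 2) (q ^ 2) (t j - t (j + 1)))⁻¹ := by
    rw [← prod_inv_distrib]
    refine prod_congr rfl fun j hj => ?_
    rw [← invQPoch_natCast, Nat.cast_sub (ht j (mem_range.mp hj))]
  rw [baileyChainTerm, prod_mul_distrib, prod_pow_eq_pow_sum, hinv, hweight, sum_add_distrib,
    sum_Ico_eq_sum_ite, sum_Ico_eq_sum_range, Nat.add_sub_cancel, div_eq_mul_inv, mul_inv]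
  simp only [add_comm 1]
  ring

end Multisum

/-- The combined Bressoud–Göllnitz–Gordon identity (with `q` replaced by `q²`).
The tuple `s` encodes `s_0 ≥ s_1 ≥ ⋯ ≥ s_{k-1} ≥ 0` via `s_m = t m`. -/
theorem bressoud_gollnitz_gordon (q : ℂ) (h0 : 0 < ‖q‖) (h1 : ‖q‖ < 1)
    (k i : ℕ) (hk : 1 ≤ k) (hi1 : 1 ≤ i) (hik : i ≤ k) :
    (∑' s : {s : Fin k → ℕ // Antitone s},
      (let t : ℕ → ℕ := fun m => if h : m < k then s.1 ⟨m, h⟩ else 0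
       qPoch (-q) (q ^ 2) (t 0) *
         q ^ ((t 0) ^ 2 + 2 * ∑ m ∈ Finset.Ico 1 k, (t m) ^ 2 +
              2 * ∑ m ∈ Finset.Ico i k, t m) /
         ((∏ m ∈ Finset.range (k - 1), qPoch (q ^ 2) (q ^ 2) (t m - t (m + 1))) *
           qPoch (q ^ 4) (q ^ 4) (t (k - 1))))) =
      qPochInf (-q) (q ^ 2) / qPochInf (q ^ 2) (q ^ 2) *
        (qPochInf (q ^ (4 * k + 2)) (q ^ (4 * k + 2)) *
          qPochInf (q ^ (2 * i + 1)) (q ^ (4 * k + 2)) *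
          qPochInf (q ^ (4 * k - 2 * i + 1)) (q ^ (4 * k + 2))) := by
  obtain ⟨a, rfl⟩ : ∃ a, i = a + 1 := ⟨i - 1, by omega⟩
  obtain ⟨d, rfl⟩ : ∃ d, k = a + d + 1 := ⟨k - (a + 1), by omega⟩
  have hq0 : q ≠ 0 := norm_pos_iff.mp h0
  have hQ := norm_pow_lt_one h1 two_ne_zero
  obtain ⟨C, hC⟩ := exists_norm_invQPoch_le (norm_pow_lt_one h1 four_ne_zero)
  have hβ (n : ℕ) : ‖(qPoch (q ^ 4) (q ^ 4) n)⁻¹‖ ≤ C := invQPoch_natCast (q ^ 4) n ▸ hC n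
  calc _ = ∑' s : {s : Fin (a + d + 1) → ℕ // Antitone s},
        baileyWeight (q ^ 2) (-q) (q ^ 2) (extendZero s.1 0) *
          baileyChainTerm (q ^ 2) (a + d) (fun j => if j < a then 0 else 1)
            (fun n => (qPoch (q ^ 4) (q ^ 4) n)⁻¹) (extendZero s.1) :=
        tsum_congr fun s => (baileyWeight_mul_baileyChainTerm q a d fun j hj =>
          extendZero_succ_le s.2 (Nat.succ_lt_succ hj)).symm
    _ = ∑' n, baileyWeight (q ^ 2) (-q) (q ^ 2) n *
          baileyTransform (q ^ 2) 0 (thetaCoeff q (2 * (a + d + 1)) (2 * d)) n := by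
        rw [tsum_antitone_mul_baileyChainTerm hQ hβ _ _ (summable_norm_baileyWeight hQ _ _),
          baileyChain_inv_qPoch hq0 h1]
    _ = _ := by
        have hbase : 2 * (2 * (a + d + 1) + 1) = 4 * (a + d + 1) + 2 := by ring
        rw [tsum_baileyWeight_mul_baileyTransform_thetaCoeff hq0 h1 (by omega),
          tsum_thetaCoeff hq0 h1 (u := 2 * (a + 1) + 1)
            (v := 4 * (a + d + 1) - 2 * (a + 1) + 1) (by omega) (by omega) (by omega), hbase]
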